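/- Let F be a formal group law over a commutative ring R with associated unit q(x,y), and for 1 ≤ i < j ≤ n write q(α) = q(x_i,x_j) ∈ R⟦x₁,…,x_n⟧ for the root α = (i,j). Let A_{α_i}, for the simple roots α_i = (i,i+1) with 1 ≤ i < n, be the generalized divided difference operators on R⟦x₁,…,x_n⟧. Then the intersection of the kernels of all the operators A_{α_i} is a rank one free module over the ring of symmetric power series R⟦x₁,…,x_n⟧^{Σ_n}, generated by the unit q(Δ₊) := Π_{1≤i<j≤n} q(x_i,x_j). -/

import Mathlib

noncomputable section
open MvPowerSeries

variable {k : Type*} [CommRing k]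

/-- Substitution of a family of power series (each with zero constant term) into a
multivariate power series, via the standard coefficient formula. -/
def psSubst {σ τ : Type*} [Fintype σ] [DecidableEq σ]
    (a : σ → MvPowerSeries τ k) (f : MvPowerSeries σ k) : MvPowerSeries τ k :=
  fun e => ∑ d ∈ Finset.Iic (Finsupp.equivFunOnFinite.symm fun _ : σ => e.sum fun _ m => m),
    (MvPowerSeries.coeff d f) * MvPowerSeries.coeff e (∏ i, a i ^ d i)

/-- The automorphism of `k⟦x,y⟧` exchanging the two variables. -/
def swapPS (f : MvPowerSeries (Fin 2) k) : MvPowerSeries (Fin 2) k :=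
  fun d => MvPowerSeries.coeff (Finsupp.equivMapDomain (Equiv.swap 0 1) d) f

/-- A formal group law over `k`. -/
def IsFormalGroupLaw (F : MvPowerSeries (Fin 2) k) : Prop :=
  swapPS F = F ∧
  psSubst ![X 0, 0] F = (X 0 : MvPowerSeries (Fin 2) k) ∧
  psSubst ![0, X 1] F = (X 1 : MvPowerSeries (Fin 2) k) ∧
  psSubst ![psSubst ![(X 0 : MvPowerSeries (Fin 3) k), X 1] F, X 2] F =
    psSubst ![(X 0 : MvPowerSeries (Fin 3) k), psSubst ![(X 1 : MvPowerSeries (Fin 3) k), X 2] F] F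

/-- The formal difference `x [-1] y = F(x, ι(y)) ∈ k⟦x,y⟧`, where `ι` is the formal inverse. -/
def formalDiff (F : MvPowerSeries (Fin 2) k) (ι : PowerSeries k) : MvPowerSeries (Fin 2) k :=
  psSubst ![X 0, psSubst (fun _ : Unit => (X 1 : MvPowerSeries (Fin 2) k)) ι] F


/-- The automorphism of `k⟦x₁,…⟧` induced by a permutation of the variables. -/
def renamePS {σ : Type*} (e : Equiv.Perm σ) (f : MvPowerSeries σ k) : MvPowerSeries σ k :=
  fun d => MvPowerSeries.coeff (Finsupp.equivMapDomain e d) f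

/-!
Write `s = (i j)` for the transposition of a simple root. The series `u - s u` vanishes under
`X i ↦ X j`, so it is divisible by `X i - X j`, which is not a zero divisor; both facts follow from
those for the variable `X i` through the automorphism `X i ↦ X i + X j`. Hence `f` is in the kernel
of `A_α` exactly when `p(α) f` is fixed by `s`. Since `q(Δ₊)` is a unit, `f = q(Δ₊) h` for a unique
`h`, and `p(α) f = q(Δ₊ \ {α}) h`, where `s` fixes the unit `q(Δ₊ \ {α})` because it permutes the
positive roots other than `α`. So `f` is in the kernel exactly when `s h = h`, and the simple
transpositions generate the symmetric group.
-/

open Equiv (Perm swap)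
open Function (update)

section Substitution

variable {σ τ : Type*}

theorem renamePS_eq_rename_symm (e : Perm σ) (f : MvPowerSeries σ k) :
    renamePS e f = rename e.symm f := by
  ext d
  have hd : (Finsupp.equivMapDomain e d).embDomain e.symm.toEmbedding = d := by
    ext s
    simp [Finsupp.embDomain_eq_mapDomain, Finsupp.equivMapDomain_eq_mapDomain,
      ← Finsupp.mapDomain_comp]
  calc coeff d (renamePS e f)
    _ = coeff (Finsupp.equivMapDomain e d) f := rfl
    _ = coeff ((Finsupp.equivMapDomain e d).embDomain e.symm.toEmbedding) (rename e.symm f) :=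
      (coeff_embDomain_rename e.symm.toEmbedding f _).symm
    _ = coeff d (rename e.symm f) := by rw [hd]

theorem coeff_prod_pow_eq_zero_of_degree_lt [Fintype σ] {a : σ → MvPowerSeries τ k}
    (ha : ∀ s, constantCoeff (a s) = 0) {d : σ →₀ ℕ} {e : τ →₀ ℕ} {s : σ}
    (h : e.degree < d s) : coeff e (∏ s, a s ^ d s) = 0 := by
  refine coeff_of_lt_order ?_
  calc (e.degree : ℕ∞)
    _ < d s := mod_cast h
    _ ≤ (a s ^ d s).order := le_order_pow_of_constantCoeff_eq_zero _ (ha s)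
    _ ≤ ∑ t, (a t ^ d t).order :=
      Finset.single_le_sum (f := fun t ↦ (a t ^ d t).order) (fun _ _ ↦ zero_le) (Finset.mem_univ s)
    _ ≤ (∏ t, a t ^ d t).order := le_order_prod _ _

theorem psSubst_eq_subst [Fintype σ] [DecidableEq σ] {a : σ → MvPowerSeries τ k}
    (ha : ∀ s, constantCoeff (a s) = 0) (f : MvPowerSeries σ k) : psSubst a f = subst a f := by
  ext e
  have hprod (d : σ →₀ ℕ) : d.prod (fun s m ↦ a s ^ m) = ∏ s, a s ^ d s :=
    Finsupp.prod_fintype _ _ fun _ ↦ pow_zero _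
  simp only [coeff_subst (hasSubst_of_constantCoeff_zero ha), hprod, smul_eq_mul]
  refine (finsum_eq_sum_of_support_subset _ fun d hd ↦ ?_).symm
  simp only [Finset.coe_Iic, Set.mem_Iic]
  intro s
  by_contra! hlt
  exact hd (mul_eq_zero_of_right _ (coeff_prod_pow_eq_zero_of_degree_lt ha hlt))

theorem psSubst_X_X (i j : σ) (f : MvPowerSeries (Fin 2) k) :
    psSubst ![(X i : MvPowerSeries σ k), X j] f = rename ![i, j] f := by
  have hX : ![(X i : MvPowerSeries σ k), X j] = X ∘ ![i, j] := by
    ext1 s; fin_cases s <;> rfl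
  rw [hX, psSubst_eq_subst (fun _ ↦ by simp), rename_eq_subst]

end Substitution

section FactorTheorem

variable {σ : Type*} [DecidableEq σ] {i j : σ}

theorem subst_update_X_subst_update_X {a b : MvPowerSeries σ k} (ha : HasSubst (update X i a))
    (hb : HasSubst (update X i b)) (f : MvPowerSeries σ k) :
    subst (update X i b) (subst (update X i a) f) =
      subst (update X i (subst (update X i b) a)) f := by
  rw [subst_comp_subst_apply ha hb]
  congr 1
  ext1 s
  rcases eq_or_ne s i with rfl | hs
  · simp
  · simp [hs, subst_X hb]

variable [Finite σ]

theorem hasSubst_update_X (i : σ) {a : MvPowerSeries σ k} (ha : constantCoeff a = 0) :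
    HasSubst (update X i a) :=
  hasSubst_of_constantCoeff_zero fun s ↦ by
    rcases eq_or_ne s i with rfl | hs <;> simp [*]

theorem coeff_subst_update_X_zero {d : σ →₀ ℕ} (hd : d i = 0) (f : MvPowerSeries σ k) :
    coeff d (subst (update X i (0 : MvPowerSeries σ k)) f) = coeff d f := by
  have hprod (c : σ →₀ ℕ) : c.prod (fun s m ↦ update X i (0 : MvPowerSeries σ k) s ^ m) =
      if c i = 0 then monomial c 1 else 0 := by
    split_ifs with hc
    · rw [monomial_one_eq]
      refine Finset.prod_congr rfl fun s hs ↦ ?_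
      have hsi : s ≠ i := by rintro rfl; exact Finsupp.mem_support_iff.1 hs hc
      simp only [Function.update_of_ne hsi]
    · exact Finset.prod_eq_zero (Finsupp.mem_support_iff.2 hc) (by simp [hc])
  rw [coeff_subst (hasSubst_update_X i (map_zero _)), finsum_eq_single _ d]
  · simp [hprod, hd]
  · intro c hc
    rw [hprod]
    split_ifs <;> simp [coeff_monomial, hc.symm]

theorem X_dvd_iff_subst_update_eq_zero (f : MvPowerSeries σ k) :
    X i ∣ f ↔ subst (update X i (0 : MvPowerSeries σ k)) f = 0 := by
  have hs : HasSubst (update X i (0 : MvPowerSeries σ k)) := hasSubst_update_X i (map_zero _)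
  constructor
  · rintro ⟨g, rfl⟩
    rw [subst_mul hs, subst_X hs, Function.update_self, zero_mul]
  · intro hf
    refine X_dvd_iff.2 fun d hd ↦ ?_
    rw [← coeff_subst_update_X_zero hd, hf, map_zero]

theorem hasSubst_update_X_add_smul_X (i j : σ) (r : k) :
    HasSubst (update X i (X i + r • X j : MvPowerSeries σ k)) :=
  hasSubst_update_X i (by simp)

theorem subst_X_add_smul_X_subst_X_add_smul_X (hij : i ≠ j) (r s : k) (f : MvPowerSeries σ k) :
    subst (update X i (X i + s • X j : MvPowerSeries σ k))
        (subst (update X i (X i + r • X j : MvPowerSeries σ k)) f) =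
      subst (update X i (X i + (r + s) • X j : MvPowerSeries σ k)) f := by
  have hs := hasSubst_update_X_add_smul_X i j s
  rw [subst_update_X_subst_update_X (hasSubst_update_X_add_smul_X i j r) hs, subst_add hs,
    subst_smul hs, subst_X hs, subst_X hs, Function.update_self, Function.update_of_ne hij.symm]
  congr 2
  module

theorem substAlgHom_X_add_smul_X_comp_of_add_eq_zero (hij : i ≠ j) {r s : k} (h : r + s = 0) :
    (substAlgHom (hasSubst_update_X_add_smul_X i j s)).comp
        (substAlgHom (hasSubst_update_X_add_smul_X i j r)) =
      AlgHom.id k (MvPowerSeries σ k) := by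
  ext1 f
  simp [subst_X_add_smul_X_subst_X_add_smul_X hij, h, subst_self]

/-- The automorphism of the ring of power series sending `X i` to `X i + r X j` and fixing the other
variables. For `r = 1` it turns questions about `X i - X j` into questions about `X i`. -/
def shear (hij : i ≠ j) (r : k) : MvPowerSeries σ k ≃ₐ[k] MvPowerSeries σ k :=
  AlgEquiv.ofAlgHom (substAlgHom (hasSubst_update_X_add_smul_X i j r))
    (substAlgHom (hasSubst_update_X_add_smul_X i j (-r)))
    (substAlgHom_X_add_smul_X_comp_of_add_eq_zero hij (neg_add_cancel r))
    (substAlgHom_X_add_smul_X_comp_of_add_eq_zero hij (add_neg_cancel r))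

theorem shear_apply (hij : i ≠ j) (r : k) (f : MvPowerSeries σ k) :
    shear hij r f = subst (update X i (X i + r • X j : MvPowerSeries σ k)) f :=
  substAlgHom_apply (hasSubst_update_X_add_smul_X i j r) f

theorem shear_X_self (hij : i ≠ j) (r : k) : shear hij r (X i) = X i + r • X j := by
  rw [shear_apply, subst_X (hasSubst_update_X_add_smul_X i j r), Function.update_self]

theorem shear_X_of_ne (hij : i ≠ j) (r : k) {s : σ} (hs : s ≠ i) : shear hij r (X s) = X s := by
  rw [shear_apply, subst_X (hasSubst_update_X_add_smul_X i j r), Function.update_of_ne hs]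

theorem shear_one_X_sub_X (hij : i ≠ j) : shear hij (1 : k) (X i - X j) = X i := by
  rw [map_sub, shear_X_self, shear_X_of_ne hij 1 hij.symm, one_smul, add_sub_cancel_right]

theorem X_sub_X_dvd_iff_rename_update_eq_zero (hij : i ≠ j) (f : MvPowerSeries σ k) :
    X i - X j ∣ f ↔ rename (update id i j) f = 0 := by
  have h0 : HasSubst (update X i (0 : MvPowerSeries σ k)) := hasSubst_update_X i (map_zero _)
  have hrename : rename (update id i j) f =
      subst (update X i (0 : MvPowerSeries σ k)) (shear hij (1 : k) f) := by
    rw [rename_eq_subst, shear_apply,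
      subst_update_X_subst_update_X (hasSubst_update_X_add_smul_X i j 1) h0,
      subst_add h0, subst_smul h0, subst_X h0, subst_X h0, Function.update_self,
      Function.update_of_ne hij.symm, zero_add, one_smul, Function.comp_update, Function.comp_id]
  rw [hrename, ← X_dvd_iff_subst_update_eq_zero, ← map_dvd_iff (shear hij (1 : k)),
    shear_one_X_sub_X]

end FactorTheorem

theorem X_sub_X_mem_nonZeroDivisors {σ : Type*} [Finite σ] {i j : σ} (hij : i ≠ j) :
    (X i - X j : MvPowerSeries σ k) ∈ nonZeroDivisors (MvPowerSeries σ k) := by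
  classical
  rw [← MulEquivClass.map_nonZeroDivisors (shear hij (1 : k)).symm]
  exact ⟨X i, X_mem_nonzeroDivisors, by simp [AlgEquiv.symm_apply_eq, shear_one_X_sub_X]⟩

section DividedDifference

variable {σ : Type*} [DecidableEq σ] {i j : σ}

/-- `g` is the divided difference `(u - r_α u) / (X i - X j)` for the root `α = (i, j)`, so that
`A_α f` is the divided difference of `p(α) f`. It is a relation because power series have no
division; see `existsUnique_isDividedDifference`. -/
def IsDividedDifference (i j : σ) (u g : MvPowerSeries σ k) : Prop :=
  (X i - X j) * g = u - rename (swap i j) u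

theorem isDividedDifference_zero_iff {u : MvPowerSeries σ k} :
    IsDividedDifference i j u 0 ↔ rename (swap i j) u = u := by
  rw [IsDividedDifference, mul_zero, eq_comm, sub_eq_zero, eq_comm]

variable [Finite σ]

theorem X_sub_X_dvd_sub_rename_swap (hij : i ≠ j) (u : MvPowerSeries σ k) :
    X i - X j ∣ u - rename (swap i j) u := by
  have hcomp : update id i j ∘ swap i j = update id i j := by
    ext s
    rcases eq_or_ne s i with rfl | hi
    · simp [hij.symm]
    rcases eq_or_ne s j with rfl | hj
    · simp [hij.symm]
    · simp [hi, Equiv.swap_apply_of_ne_of_ne hi hj]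
  rw [X_sub_X_dvd_iff_rename_update_eq_zero hij, map_sub, rename_rename, sub_eq_zero]
  congr!
  exact hcomp.symm

theorem existsUnique_isDividedDifference (hij : i ≠ j) (u : MvPowerSeries σ k) :
    ∃! g, IsDividedDifference i j u g := by
  obtain ⟨g, hg⟩ := X_sub_X_dvd_sub_rename_swap hij u
  refine ⟨g, hg.symm, fun g' hg' ↦ ?_⟩
  refine sub_eq_zero.1 ((X_sub_X_mem_nonZeroDivisors hij).1 (g' - g) ?_)
  rw [mul_sub, sub_eq_zero]
  exact hg'.trans hg

theorem forall_isDividedDifference_eq_zero_iff (hij : i ≠ j) (u : MvPowerSeries σ k) :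
    (∀ g, IsDividedDifference i j u g → g = 0) ↔ rename (swap i j) u = u := by
  obtain ⟨g, hg, hunique⟩ := existsUnique_isDividedDifference hij u
  rw [← isDividedDifference_zero_iff]
  exact ⟨fun h ↦ h g hg ▸ hg, fun h g' hg' ↦ (hunique g' hg').trans (hunique 0 h).symm⟩

end DividedDifference

section Roots

/-- The positive roots `Δ₊` of type `A`: the pairs `(i, j)` with `i < j`. The simple roots are those
with `i ⋖ j`. -/
def positiveRoots (ι : Type*) [Fintype ι] [LinearOrder ι] : Finset (ι × ι) :=
  Finset.univ.filter fun α ↦ α.1 < α.2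

/-- The product `q(Δ) = ∏ q(X i, X j)` over the roots `(i, j)` of a finite set `Δ`. -/
def rootProd {ι : Type*} (q : MvPowerSeries (Fin 2) k) (Δ : Finset (ι × ι)) : MvPowerSeries ι k :=
  ∏ α ∈ Δ, rename ![α.1, α.2] q

variable {ι : Type*}

theorem isUnit_rootProd {q : MvPowerSeries (Fin 2) k} (hq : IsUnit q) (Δ : Finset (ι × ι)) :
    IsUnit (rootProd q Δ) :=
  IsUnit.prod_iff.2 fun _ _ ↦ hq.map _

theorem rename_rootProd (e : Perm ι) (q : MvPowerSeries (Fin 2) k) (Δ : Finset (ι × ι)) :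
    rename e (rootProd q Δ) = rootProd q (Δ.map (e.prodCongr e).toEmbedding) := by
  simp only [rootProd, map_prod, Finset.prod_map, rename_rename]
  refine Finset.prod_congr rfl fun α _ ↦ ?_
  congr!
  ext s
  fin_cases s <;> rfl

theorem map_swap_positiveRoots_erase [Fintype ι] [LinearOrder ι] {i j : ι} (hij : i ⋖ j) :
    ((positiveRoots ι).erase (i, j)).map ((swap i j).prodCongr (swap i j)).toEmbedding =
      (positiveRoots ι).erase (i, j) := by
  refine Finset.map_eq_of_subset fun α hα ↦ ?_
  obtain ⟨⟨a, b⟩, hab, rfl⟩ := Finset.mem_map.1 hα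
  have hlt := hij.lt
  have hgap (c : ι) := @hij.2 c
  simp only [positiveRoots, Finset.mem_erase, Finset.mem_filter, Finset.mem_univ, true_and,
    Equiv.coe_toEmbedding, Equiv.prodCongr_apply, Prod.map, ne_eq, Prod.mk.injEq] at hab ⊢
  grind

theorem rename_mul_rootProd_positiveRoots [Fintype ι] [LinearOrder ι] {i j : ι} (hij : i ⋖ j)
    {p q : MvPowerSeries (Fin 2) k} (hpq : p * q = 1) :
    rename ![i, j] p * rootProd q (positiveRoots ι) =
      rootProd q ((positiveRoots ι).erase (i, j)) := by
  have hmem : (i, j) ∈ positiveRoots ι := by simpa [positiveRoots] using hij.lt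
  rw [rootProd, ← Finset.mul_prod_erase _ _ hmem, ← mul_assoc, ← map_mul, hpq, map_one, one_mul,
    rootProd]

theorem rename_swap_mul_rootProd_mul_eq_iff [Fintype ι] [LinearOrder ι] {i j : ι} (hij : i ⋖ j)
    {p q : MvPowerSeries (Fin 2) k} (hpq : p * q = 1) (h : MvPowerSeries ι k) :
    rename (swap i j) (rename ![i, j] p * (rootProd q (positiveRoots ι) * h)) =
        rename ![i, j] p * (rootProd q (positiveRoots ι) * h) ↔
      rename (swap i j) h = h := by
  have hunit := isUnit_rootProd (.of_mul_eq_one_right p hpq) ((positiveRoots ι).erase (i, j))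
  rw [← mul_assoc, rename_mul_rootProd_positiveRoots hij hpq, map_mul, rename_rootProd,
    map_swap_positiveRoots_erase hij, hunit.mul_right_inj]

theorem prod_psSubst_X_X_eq_rootProd [Fintype ι] [LinearOrder ι] (q : MvPowerSeries (Fin 2) k) :
    ∏ α ∈ Finset.univ.filter (fun α : ι × ι ↦ α.1 < α.2),
        psSubst ![(X α.1 : MvPowerSeries ι k), X α.2] q =
      rootProd q (positiveRoots ι) := by
  simp only [psSubst_X_X, rootProd, positiveRoots]

end Roots

section Symmetric

theorem forall_renamePS_eq_self_iff {σ : Type*} (h : MvPowerSeries σ k) :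
    (∀ e : Perm σ, renamePS e h = h) ↔ ∀ e : Perm σ, rename e h = h :=
  (Equiv.inv (Perm σ)).forall_congr fun e ↦ by rw [renamePS_eq_rename_symm]; rfl

theorem forall_rename_eq_self_iff_of_closure_eq_top {σ : Type*} {S : Set (Perm σ)}
    (hS : Submonoid.closure S = ⊤) (h : MvPowerSeries σ k) :
    (∀ e : Perm σ, rename e h = h) ↔ ∀ e ∈ S, rename e h = h := by
  refine ⟨fun hsymm e _ ↦ hsymm e, fun hgen e ↦ ?_⟩
  induction hS ▸ Submonoid.mem_top e using Submonoid.closure_induction with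
  | mem e he => exact hgen e he
  | one => exact rename_id_apply h
  | mul e e' _ _ he he' =>
    calc rename (e * e') h = rename e (rename e' h) := (rename_rename e' e h).symm
      _ = h := by rw [he', he]

theorem forall_rename_eq_self_iff_swap {n : ℕ} (h : MvPowerSeries (Fin n) k) :
    (∀ e : Perm (Fin n), rename e h = h) ↔ ∀ i j : Fin n, i ⋖ j → rename (swap i j) h = h := by
  refine ⟨fun hsymm i j _ ↦ hsymm _, fun hswap ↦ ?_⟩
  cases n with
  | zero => exact fun e ↦ by rw [Subsingleton.elim e 1]; exact rename_id_apply h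
  | succ n =>
    rw [forall_rename_eq_self_iff_of_closure_eq_top (Equiv.Perm.mclosure_swap_castSucc_succ n)]
    rintro _ ⟨i, rfl⟩
    exact hswap _ _ (Fin.covBy_iff.2 (by simp))

end Symmetric

theorem stmt7_general {p q : MvPowerSeries (Fin 2) k} (hpq : p * q = 1) {n : ℕ}
    (f : MvPowerSeries (Fin n) k) :
    (∀ i j : Fin n, (j : ℕ) = (i : ℕ) + 1 →
      ∀ g : MvPowerSeries (Fin n) k,
        ((X i : MvPowerSeries (Fin n) k) - X j) * g =
          psSubst ![(X i : MvPowerSeries (Fin n) k), X j] p * f -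
            renamePS (swap i j) (psSubst ![(X i : MvPowerSeries (Fin n) k), X j] p * f) →
        g = 0) ↔
      ∃! h : MvPowerSeries (Fin n) k,
        (∀ e : Perm (Fin n), renamePS e h = h) ∧
        f = (∏ x ∈ Finset.univ.filter (fun x : Fin n × Fin n => x.1 < x.2),
              psSubst ![(X x.1 : MvPowerSeries (Fin n) k), X x.2] q) * h := by
  have hunit := isUnit_rootProd (.of_mul_eq_one_right p hpq) (positiveRoots (Fin n))
  obtain ⟨h, rfl⟩ : rootProd q (positiveRoots (Fin n)) ∣ f := hunit.dvd
  have hadj (i j : Fin n) : (j : ℕ) = i + 1 ↔ i ⋖ j := by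
    rw [Fin.covBy_iff, Nat.covBy_iff_add_one_eq, eq_comm]
  simp only [prod_psSubst_X_X_eq_rootProd]
  simp only [psSubst_X_X, renamePS_eq_rename_symm (swap _ _),
    Equiv.symm_swap, hadj, hunit.mul_right_inj, forall_renamePS_eq_self_iff]
  calc
    _ ↔ ∀ i j : Fin n, i ⋖ j → rename (swap i j) h = h :=
      forall₃_congr fun i j hij ↦ (forall_isDividedDifference_eq_zero_iff hij.ne _).trans
        (rename_swap_mul_rootProd_mul_eq_iff hij hpq h)
    _ ↔ ∀ e : Perm (Fin n), rename e h = h := (forall_rename_eq_self_iff_swap h).symm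
    _ ↔ ∃! h', (∀ e : Perm (Fin n), rename e h' = h') ∧ h = h' :=
      ⟨fun hsymm ↦ ⟨h, ⟨hsymm, rfl⟩, fun _ hh' ↦ hh'.2.symm⟩,
        fun ⟨_, ⟨hsymm, hh'⟩, _⟩ ↦ hh' ▸ hsymm⟩

theorem stmt7 (F : MvPowerSeries (Fin 2) k) (hF : IsFormalGroupLaw F)
    (ι : PowerSeries k) (hι0 : PowerSeries.constantCoeff ι = 0)
    (hι : psSubst ![PowerSeries.X, ι] F = 0)
    (q p : MvPowerSeries (Fin 2) k)
    (hq : formalDiff F ι = ((X 0 : MvPowerSeries (Fin 2) k) - X 1) * q)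
    (hp : p * q = 1)
    (n : ℕ) (hn : 2 ≤ n)
    (f : MvPowerSeries (Fin n) k) :
    -- `f` lies in the kernel of every `A_{αᵢ}` for the simple roots `αᵢ = (i, i+1)` …
    (∀ i j : Fin n, (j : ℕ) = (i : ℕ) + 1 →
      ∀ g : MvPowerSeries (Fin n) k,
        ((X i : MvPowerSeries (Fin n) k) - X j) * g =
          psSubst ![(X i : MvPowerSeries (Fin n) k), X j] p * f -
            renamePS (Equiv.swap i j)
              (psSubst ![(X i : MvPowerSeries (Fin n) k), X j] p * f) →
        g = 0)
    -- … iff `f = q(Δ₊)·h` for a unique symmetric power series `h`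
    ↔ ∃! h : MvPowerSeries (Fin n) k,
        (∀ e : Equiv.Perm (Fin n), renamePS e h = h) ∧
        f = (∏ x ∈ Finset.univ.filter (fun x : Fin n × Fin n => x.1 < x.2),
              psSubst ![(X x.1 : MvPowerSeries (Fin n) k), X x.2] q) * h :=
  stmt7_general hp f
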